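/- arXiv:math/0506117 — 2 statements merged into one kernel-verified Lean document; each statement's English description precedes it below -/
import Mathlib

section
/- Let m ≥ 1 and let k₁,…,k_m be positive integers with k_m ≥ 2. Then for every complex z with |z| < 1, the multiple polylogarithm satisfies the differential equation d/dz Li_{k₁,…,k_{m−1},k_m}(z) = (1/z) · Li_{k₁,…,k_{m−1},k_m−1}(z) for z ≠ 0, i.e. the function z ↦ Li_{k₁,…,k_m}(z) has derivative Li_{k₁,…,k_{m−1},k_m−1}(z)/z at every nonzero z in the open unit disc. -/
/-- Index type for multiple polylogarithm sums: strictly increasing tuples of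
positive integers `0 < n₁ < ⋯ < n_{m+1}`. -/
def MPLIdx (m : ℕ) : Type :=
  {f : Fin (m + 1) → ℕ // StrictMono f ∧ ∀ i, 0 < f i}

/-- The one-variable multiple polylogarithm
`Li_{k₁,…,k_{m+1}}(z) = Σ_{0<n₁<⋯<n_{m+1}} z^{n_{m+1}}/(n₁^{k₁}⋯n_{m+1}^{k_{m+1}})`. -/
noncomputable def MPL (m : ℕ) (k : Fin (m + 1) → ℕ) (z : ℂ) : ℂ :=
  ∑' n : MPLIdx m, z ^ (n.1 (Fin.last m)) / ∏ i, ((n.1 i : ℂ)) ^ k i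

/-!
The series `∑ z ^ n_last / ∏ nᵢ ^ kᵢ` is dominated by `∑ r ^ n_last` on the ball of radius `r < 1`,
so Weierstrass' theorem allows termwise differentiation; each derivative produces a factor `n_last`,
which lowers the last exponent by one, and a factor `z⁻¹`. To see that `∑ r ^ n_last` converges,
write `r = s ^ (m + 1)`: since `n_last` is the largest entry, `r ^ n_last ≤ ∏ s ^ nᵢ`, and the right
side is summable even over all finite sets of naturals.
-/

theorem hasDerivAt_tsum_mul_pow {ι : Type*} {a : ι → ℂ} {N : ι → ℕ} {r : ℝ} {z : ℂ}
    (ha : Summable fun i => ‖a i‖ * r ^ N i) (hz : ‖z‖ < r) :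
    HasDerivAt (fun w => ∑' i, a i * w ^ N i) (∑' i, a i * (N i * z ^ (N i - 1))) z := by
  have term_differentiable (i : ι) :
      DifferentiableOn ℂ (fun w => a i * w ^ N i) (Metric.ball 0 r) := by fun_prop
  have norm_term_le (i : ι) (w : ℂ) (hw : w ∈ Metric.ball 0 r) :
      ‖a i * w ^ N i‖ ≤ ‖a i‖ * r ^ N i := by
    rw [norm_mul, norm_pow]
    gcongr
    exact (mem_ball_zero_iff.mp hw).le
  have deriv_term (i : ι) : deriv (fun w => a i * w ^ N i) z = a i * (N i * z ^ (N i - 1)) :=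
    ((hasDerivAt_pow (N i) z).const_mul (a i)).deriv
  have z_mem : z ∈ Metric.ball 0 r := mem_ball_zero_iff.mpr hz
  have deriv_eq := (Complex.hasSum_deriv_of_summable_norm ha term_differentiable Metric.isOpen_ball
    norm_term_le z_mem).tsum_eq
  simp only [deriv_term] at deriv_eq
  rw [deriv_eq]
  exact ((Complex.differentiableOn_tsum_of_summable_norm ha term_differentiable Metric.isOpen_ball
    norm_term_le).differentiableAt (Metric.isOpen_ball.mem_nhds z_mem)).hasDerivAt

theorem prod_pow_eq_mul_prod_pow_update {ι M : Type*} [Fintype ι] [DecidableEq ι] [CommMonoid M]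
    (x : ι → M) (k : ι → ℕ) {j : ι} (hj : k j ≠ 0) :
    ∏ i, x i ^ k i = x j * ∏ i, x i ^ Function.update k j (k j - 1) i := by
  have update_of_erase : ∀ i ∈ Finset.univ.erase j,
      x i ^ Function.update k j (k j - 1) i = x i ^ k i := fun i hi => by
    rw [Function.update_of_ne (Finset.ne_of_mem_erase hi)]
  rw [← Finset.mul_prod_erase _ _ (Finset.mem_univ j),
    ← Finset.mul_prod_erase _ _ (Finset.mem_univ j), Finset.prod_congr rfl update_of_erase,
    Function.update_self, ← mul_assoc, mul_pow_sub_one hj]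

theorem one_le_norm_prod_natCast_pow {ι 𝕜 : Type*} [Fintype ι] [RCLike 𝕜] {n : ι → ℕ}
    (hn : ∀ i, 0 < n i) (k : ι → ℕ) : 1 ≤ ‖∏ i, (n i : 𝕜) ^ k i‖ := by
  simp only [norm_prod, norm_pow, RCLike.norm_natCast]
  exact Finset.one_le_prod fun i _ => one_le_pow₀ (mod_cast hn i)

namespace MPLIdx

variable {m : ℕ}

theorem summable_prod {f : ℕ → ℝ} (hf₀ : 0 ≤ f) (hf : Summable f) :
    Summable fun n : MPLIdx m => ∏ i, f (n.1 i) := by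
  let entries (n : MPLIdx m) : Finset ℕ := Finset.univ.map ⟨n.1, n.2.1.injective⟩
  have entries_injective : Function.Injective entries := fun n n' h => by
    refine Subtype.ext ((StrictMono.range_inj n.2.1 n'.2.1).mp ?_)
    simpa [entries] using congrArg (fun s : Finset ℕ => (s : Set ℕ)) h
  refine ((summable_finsetProd_of_summable_nonneg hf₀ hf).comp_injective
    entries_injective).congr fun n => ?_
  simp [entries]

theorem summable_pow_last {r : ℝ} (hr₀ : 0 ≤ r) (hr₁ : r < 1) :
    Summable fun n : MPLIdx m => r ^ n.1 (Fin.last m) := by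
  obtain ⟨s, hs₀, rfl⟩ : ∃ s : ℝ, 0 ≤ s ∧ s ^ (m + 1) = r :=
    ⟨r ^ ((m + 1 : ℕ) : ℝ)⁻¹, by positivity, Real.rpow_inv_natCast_pow hr₀ m.succ_ne_zero⟩
  have hs₁ : s < 1 := (pow_lt_one_iff_of_nonneg hs₀ m.succ_ne_zero).mp hr₁
  refine (summable_prod (fun j => pow_nonneg hs₀ j)
    (summable_geometric_of_lt_one hs₀ hs₁)).of_nonneg_of_le (fun n => by positivity) fun n => ?_
  calc (s ^ (m + 1)) ^ n.1 (Fin.last m)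
      = ∏ _i : Fin (m + 1), s ^ n.1 (Fin.last m) := by
        rw [Fin.prod_const, pow_right_comm]
    _ ≤ ∏ i, s ^ n.1 i := by
        exact Finset.prod_le_prod (fun i _ => by positivity) fun i _ =>
          pow_le_pow_of_le_one hs₀ hs₁.le (n.2.1.monotone (Fin.le_last i))

theorem inv_prod_mul_deriv_pow_last {K : Type*} [Field K] [CharZero K] (n : MPLIdx m)
    {k : Fin (m + 1) → ℕ} (hk : k (Fin.last m) ≠ 0) {z : K} (hz : z ≠ 0) :
    (∏ i, (n.1 i : K) ^ k i)⁻¹ * (n.1 (Fin.last m) * z ^ (n.1 (Fin.last m) - 1)) =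
      z ^ n.1 (Fin.last m) /
        (∏ i, (n.1 i : K) ^ Function.update k (Fin.last m) (k (Fin.last m) - 1) i) / z := by
  have last_ne_zero : n.1 (Fin.last m) ≠ 0 := (n.2.2 _).ne'
  have cast_last_ne_zero : (n.1 (Fin.last m) : K) ≠ 0 := mod_cast last_ne_zero
  rw [prod_pow_eq_mul_prod_pow_update _ k hk, ← pow_sub_one_mul last_ne_zero z]
  field_simp

end MPLIdx

theorem mpl_hasDerivAt_of_last_ge_two_general {m : ℕ} {k : Fin (m + 1) → ℕ}
    (hk : k (Fin.last m) ≠ 0) {z : ℂ} (hz : ‖z‖ < 1) (hz₀ : z ≠ 0) :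
    HasDerivAt (MPL m k)
      (MPL m (Function.update k (Fin.last m) (k (Fin.last m) - 1)) z / z) z := by
  obtain ⟨r, hzr, hr₁⟩ := exists_between hz
  have hr₀ : 0 ≤ r := (norm_nonneg z).trans hzr.le
  have coeff_summable : Summable fun n : MPLIdx m =>
      ‖(∏ i, (n.1 i : ℂ) ^ k i)⁻¹‖ * r ^ n.1 (Fin.last m) := by
    refine (MPLIdx.summable_pow_last hr₀ hr₁).of_nonneg_of_le (fun n => by positivity) fun n => ?_
    rw [norm_inv]
    exact mul_le_of_le_one_left (by positivity)
      (inv_le_one_of_one_le₀ (one_le_norm_prod_natCast_pow n.2.2 k))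
  have termwise := hasDerivAt_tsum_mul_pow coeff_summable hzr
  simp only [MPLIdx.inv_prod_mul_deriv_pow_last _ hk hz₀, tsum_div_const,
    inv_mul_eq_div] at termwise
  exact termwise

/-- for positive integers `k₁,…,k_m` with `k_m ≥ 2`, at every
nonzero `z` in the open unit disc,
`d/dz Li_{k₁,…,k_{m−1},k_m}(z) = Li_{k₁,…,k_{m−1},k_m−1}(z)/z`. -/
theorem mpl_hasDerivAt_of_last_ge_two (m : ℕ) (k : Fin (m + 1) → ℕ)
    (hk : ∀ i, 1 ≤ k i) (hklast : 2 ≤ k (Fin.last m)) :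
    ∀ z : ℂ, ‖z‖ < 1 → z ≠ 0 →
      HasDerivAt (MPL m k)
        (MPL m (Function.update k (Fin.last m) (k (Fin.last m) - 1)) z / z) z :=
  fun _ hz hz₀ => mpl_hasDerivAt_of_last_ge_two_general (by omega) hz hz₀
end

section
/- Let k₁, k₂ be integers with k₁ ≥ 2 and k₂ ≥ 2. Then the simplest double shuffle relation holds: ζ(k₁,k₂) + ζ(k₂,k₁) + ζ(k₁+k₂) = Σ_{i=0}^{k₁−1} C(k₂−1+i, i)·ζ(k₁−i, k₂+i) + Σ_{j=0}^{k₂−1} C(k₁−1+j, j)·ζ(k₂−j, k₁+j), where C(·,·) denotes the binomial coefficient. -/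
/-- The single zeta value `ζ(k) = Σ_{n≥1} 1/n^k`. -/
noncomputable def zeta1 (k : ℕ) : ℝ :=
  ∑' n : ℕ+, ((n : ℝ) ^ k)⁻¹

/-- The double zeta value `ζ(a,b) = Σ_{0<n₁<n₂} 1/(n₁^a n₂^b)`. -/
noncomputable def zeta2 (a b : ℕ) : ℝ :=
  ∑' q : {q : ℕ+ × ℕ+ // q.1 < q.2}, ((q.1.1 : ℝ) ^ a * (q.1.2 : ℝ) ^ b)⁻¹

/-!
Both sides equal `ζ(k₁) ζ(k₂) = ∑ 1 / (m ^ k₁ n ^ k₂)`, summed over all pairs of positive integers.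
Splitting the pairs according to `m < n`, `n < m` and `m = n` gives the left-hand side. For the
right-hand side, iterating `1 / (m n) = (1 / (m + n)) (1 / m + 1 / n)` expands the summand into
partial fractions `1 / (m ^ p (m + n) ^ q)` and `1 / (n ^ p (m + n) ^ q)`, and each of these sums to
`ζ(p, q)` because `(m, n) ↦ (m, m + n)` runs through all increasing pairs. This expansion replaces
the integral representation of the shuffle product.
-/

section PartialFractions

variable {R : Type*} [CommSemiring R]

/-- The part of the partial fraction expansion of `x ^ a * y ^ b` that involves `x`, where
`x = 1 / m`, `y = 1 / n` and `t = 1 / (m + n)`. The coefficients `C(b - 1 + i, i)` are written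
`b.multichoose i`, which also gives the right values at `b = 0`. -/
def partialFractionPart (t x : R) (a b : ℕ) : R :=
  ∑ i ∈ Finset.range a, (b.multichoose i : R) * (x ^ (a - i) * t ^ (b + i))

theorem partialFractionPart_zero_left (t x : R) (b : ℕ) : partialFractionPart t x 0 b = 0 := by
  simp [partialFractionPart]

theorem partialFractionPart_succ_zero (t x : R) (a : ℕ) :
    partialFractionPart t x (a + 1) 0 = x ^ (a + 1) := by
  simp [partialFractionPart, Finset.sum_range_succ']

theorem partialFractionPart_succ_succ (t x : R) (a b : ℕ) :
    partialFractionPart t x (a + 1) (b + 1) =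
      t * (partialFractionPart t x a (b + 1) + partialFractionPart t x (a + 1) b) := by
  have pascal (i : ℕ) : ((b + 1).multichoose (i + 1) : R) *
      (x ^ (a + 1 - (i + 1)) * t ^ (b + 1 + (i + 1))) =
      t * ((b + 1).multichoose i * (x ^ (a - i) * t ^ (b + 1 + i)) +
        b.multichoose (i + 1) * (x ^ (a + 1 - (i + 1)) * t ^ (b + (i + 1)))) := by
    rw [Nat.multichoose_succ_succ, Nat.add_sub_add_right]
    push_cast
    ring
  simp only [partialFractionPart, Finset.sum_range_succ' _ a, ← add_assoc]
  rw [← Finset.sum_add_distrib, mul_add, Finset.mul_sum]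
  congr 1
  · exact Finset.sum_congr rfl fun i _ ↦ pascal i
  · simp only [Nat.multichoose_zero_right]
    ring

theorem pow_mul_pow_eq_partialFractionPart_add {t x y : R} (h : x * y = t * (x + y)) :
    ∀ {a b : ℕ}, a + b ≠ 0 →
      x ^ a * y ^ b = partialFractionPart t x a b + partialFractionPart t y b a
  | 0, 0, hab => absurd rfl hab
  | 0, b + 1, _ => by simp [partialFractionPart_zero_left, partialFractionPart_succ_zero]
  | a + 1, 0, _ => by simp [partialFractionPart_zero_left, partialFractionPart_succ_zero]
  | a + 1, b + 1, _ => calc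
      x ^ (a + 1) * y ^ (b + 1) = x ^ a * y ^ b * (x * y) := by ring
      _ = t * (x ^ a * y ^ (b + 1) + x ^ (a + 1) * y ^ b) := by rw [h]; ring
      _ = partialFractionPart t x (a + 1) (b + 1) + partialFractionPart t y (b + 1) (a + 1) := by
        rw [pow_mul_pow_eq_partialFractionPart_add h (by lia : a + (b + 1) ≠ 0),
          pow_mul_pow_eq_partialFractionPart_add h (by lia : a + 1 + b ≠ 0),
          partialFractionPart_succ_succ, partialFractionPart_succ_succ]
        ring

end PartialFractions

theorem inv_pow_mul_pow_eq_sum_add_sum {K : Type*} [Field K] {m n : K} (hm : m ≠ 0) (hn : n ≠ 0)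
    (hmn : m + n ≠ 0) {a b : ℕ} (hab : a + b ≠ 0) :
    (m ^ a)⁻¹ * (n ^ b)⁻¹ =
      ∑ i ∈ Finset.range a, (b.multichoose i : K) * (m ^ (a - i) * (m + n) ^ (b + i))⁻¹ +
      ∑ j ∈ Finset.range b, (a.multichoose j : K) * (n ^ (b - j) * (n + m) ^ (a + j))⁻¹ := by
  have h : m⁻¹ * n⁻¹ = (m + n)⁻¹ * (m⁻¹ + n⁻¹) := by
    field_simp
    ring
  simpa only [partialFractionPart, add_comm n m, mul_inv, inv_pow] using
    pow_mul_pow_eq_partialFractionPart_add h hab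

theorem hasSum_prod_of_lt_of_gt_of_diag {α M : Type*} [LinearOrder α]
    [AddCommMonoid M] [TopologicalSpace M] [ContinuousAdd M] {f : α × α → M} {a b c : M}
    (hlt : HasSum (fun q : {q : α × α // q.1 < q.2} ↦ f q) a)
    (hgt : HasSum (fun q : {q : α × α // q.1 < q.2} ↦ f q.1.swap) b)
    (hdiag : HasSum (fun x ↦ f (x, x)) c) : HasSum f (a + b + c) := by
  have hgt' : HasSum (f ∘ (↑) : {q : α × α | q.2 < q.1} → M) b :=
    ((Equiv.prodComm α α).subtypeEquiv fun _ ↦ Iff.rfl).hasSum_iff.1 hgt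
  have hdiag' : HasSum (f ∘ (↑) : Set.diagonal α → M) c := by
    rw [← Set.range_diag]
    exact Function.diag_injective.hasSum_range_iff.2 hdiag
  have hdisj : Disjoint {q : α × α | q.1 < q.2} {q | q.2 < q.1} :=
    Set.disjoint_left.2 fun _ h h' ↦ lt_asymm h h'
  have hcompl : IsCompl ({q : α × α | q.1 < q.2} ∪ {q | q.2 < q.1}) (Set.diagonal α) := by
    have hoffDiag : {q : α × α | q.1 < q.2} ∪ {q | q.2 < q.1} = (Set.diagonal α)ᶜ :=
      Set.ext fun _ ↦ lt_or_lt_iff_ne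
    exact hoffDiag ▸ isCompl_compl.symm
  exact (HasSum.add_disjoint hdisj hlt hgt').add_isCompl hcompl hdiag'

theorem summable_pnat_rpow_inv {p : ℝ} (hp : 1 < p) : Summable fun n : ℕ+ ↦ ((n : ℝ) ^ p)⁻¹ :=
  (Real.summable_nat_rpow_inv.2 hp).comp_injective PNat.coe_injective

theorem hasSum_zeta1 {k : ℕ} (hk : 2 ≤ k) : HasSum (fun n : ℕ+ ↦ ((n : ℝ) ^ k)⁻¹) (zeta1 k) :=
  ((Real.summable_nat_pow_inv.2 hk).comp_injective PNat.coe_injective).hasSum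

-- Evening the exponents out to `3 / 2 > 1` bounds `ζ(a, b)` by a product of convergent `p`-series.
theorem rpow_mul_rpow_le_pow_mul_pow {m n : ℝ} (hm : 1 ≤ m) (hmn : m ≤ n) {a b : ℕ} (ha : a ≠ 0)
    (hb : 2 ≤ b) : m ^ (3 / 2 : ℝ) * n ^ (3 / 2 : ℝ) ≤ m ^ a * n ^ b := by
  have hm₀ : 0 < m := by linarith
  have hn₀ : 0 < n := by linarith
  calc m ^ (3 / 2 : ℝ) * n ^ (3 / 2 : ℝ)
      = m * (m ^ (1 / 2 : ℝ) * n ^ (3 / 2 : ℝ)) := by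
        rw [← mul_assoc, ← Real.rpow_one_add' hm₀.le (by norm_num)]
        norm_num
    _ ≤ m * (n ^ (1 / 2 : ℝ) * n ^ (3 / 2 : ℝ)) := by gcongr
    _ = m ^ 1 * n ^ 2 := by
        rw [← Real.rpow_add hn₀, pow_one, ← Real.rpow_natCast]
        norm_num
    _ ≤ m ^ a * n ^ b := by
        gcongr
        · lia
        · linarith

theorem hasSum_zeta2 {a b : ℕ} (ha : a ≠ 0) (hb : 2 ≤ b) :
    HasSum (fun q : {q : ℕ+ × ℕ+ // q.1 < q.2} ↦ ((q.1.1 : ℝ) ^ a * (q.1.2 : ℝ) ^ b)⁻¹)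
      (zeta2 a b) := by
  have hp : Summable fun n : ℕ+ ↦ ((n : ℝ) ^ (3 / 2 : ℝ))⁻¹ :=
    summable_pnat_rpow_inv (by norm_num)
  have hprod := (hp.mul_of_nonneg hp (fun _ ↦ by positivity) (fun _ ↦ by positivity)).subtype
    {q : ℕ+ × ℕ+ | q.1 < q.2}
  refine (hprod.of_nonneg_of_le (fun _ ↦ by positivity) fun ⟨⟨m, n⟩, hlt⟩ ↦ ?_).hasSum
  have hm : (1 : ℝ) ≤ m := by exact_mod_cast one_le (a := m)
  have hmn : (m : ℝ) ≤ n := by exact_mod_cast (le_of_lt hlt)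
  simp only [Function.comp_apply, ← mul_inv]
  exact inv_anti₀ (by positivity) (rpow_mul_rpow_le_pow_mul_pow hm hmn ha hb)

/-- The bijection `(m, n) ↦ (m, m + n)` from pairs of positive integers to increasing pairs, which
turns the partial fractions in `m` and `m + n` into the terms of double zeta values. -/
def pnatProdEquivLt : ℕ+ × ℕ+ ≃ {q : ℕ+ × ℕ+ // q.1 < q.2} where
  toFun p := ⟨(p.1, p.1 + p.2), PNat.lt_add_right p.1 p.2⟩
  invFun q := (q.1.1, q.1.2 - q.1.1)
  left_inv p :=
    Prod.ext rfl (add_left_cancel (PNat.add_sub_of_lt (PNat.lt_add_right p.1 p.2)))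
  right_inv q := Subtype.ext (Prod.ext rfl (PNat.add_sub_of_lt q.2))

theorem hasSum_zeta2_add {a b : ℕ} (ha : a ≠ 0) (hb : 2 ≤ b) :
    HasSum (fun p : ℕ+ × ℕ+ ↦ ((p.1 : ℝ) ^ a * ((p.1 : ℝ) + p.2) ^ b)⁻¹) (zeta2 a b) := by
  simpa [Function.comp_def, pnatProdEquivLt] using
    pnatProdEquivLt.hasSum_iff.2 (hasSum_zeta2 ha hb)

theorem zeta1_mul_zeta1_eq_zeta2_add_zeta2_add_zeta1 {a b : ℕ} (ha : 2 ≤ a) (hb : 2 ≤ b) :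
    zeta1 a * zeta1 b = zeta2 a b + zeta2 b a + zeta1 (a + b) := by
  refine (hasSum_zeta1 ha).mul_eq (hasSum_zeta1 hb) ?_
  apply hasSum_prod_of_lt_of_gt_of_diag
  · simpa only [mul_inv] using hasSum_zeta2 (by lia : a ≠ 0) hb
  · simpa only [mul_inv, mul_comm, Prod.fst_swap, Prod.snd_swap] using
      hasSum_zeta2 (by lia : b ≠ 0) ha
  · simpa only [pow_add, mul_inv] using hasSum_zeta1 (by lia : 2 ≤ a + b)

theorem hasSum_sum_multichoose_mul_zeta2 (a : ℕ) {b : ℕ} (hb : 2 ≤ b) :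
    HasSum (fun p : ℕ+ × ℕ+ ↦ ∑ i ∈ Finset.range a,
        (b.multichoose i : ℝ) * ((p.1 : ℝ) ^ (a - i) * ((p.1 : ℝ) + p.2) ^ (b + i))⁻¹)
      (∑ i ∈ Finset.range a, (b.multichoose i : ℝ) * zeta2 (a - i) (b + i)) :=
  hasSum_sum fun i hi ↦
    have hia := Finset.mem_range.1 hi
    (hasSum_zeta2_add (by lia : a - i ≠ 0) (by lia : 2 ≤ b + i)).mul_left _

theorem zeta1_mul_zeta1_eq_sum_multichoose {a b : ℕ} (ha : 2 ≤ a) (hb : 2 ≤ b) :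
    zeta1 a * zeta1 b =
      ∑ i ∈ Finset.range a, (b.multichoose i : ℝ) * zeta2 (a - i) (b + i) +
      ∑ j ∈ Finset.range b, (a.multichoose j : ℝ) * zeta2 (b - j) (a + j) := by
  refine (hasSum_zeta1 ha).mul_eq (hasSum_zeta1 hb) ?_
  have hswap := (Equiv.prodComm ℕ+ ℕ+).hasSum_iff.2 (hasSum_sum_multichoose_mul_zeta2 b ha)
  have hexpand (p : ℕ+ × ℕ+) := inv_pow_mul_pow_eq_sum_add_sum (m := (p.1 : ℝ)) (n := p.2)
    (a := a) (b := b) (by positivity) (by positivity) (by positivity) (by lia)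
  rw [funext hexpand]
  exact (hasSum_sum_multichoose_mul_zeta2 a hb).add hswap

theorem choose_sub_one_add_eq_multichoose {n : ℕ} (hn : n ≠ 0) (k : ℕ) :
    (n - 1 + k).choose k = n.multichoose k := by
  rw [Nat.multichoose_eq, Nat.sub_add_comm (Nat.one_le_iff_ne_zero.2 hn)]

/-- the simplest double shuffle relation
`ζ(k₁,k₂) + ζ(k₂,k₁) + ζ(k₁+k₂)
  = Σ_{i=0}^{k₁−1} C(k₂−1+i,i)·ζ(k₁−i,k₂+i)
  + Σ_{j=0}^{k₂−1} C(k₁−1+j,j)·ζ(k₂−j,k₁+j)` for `k₁, k₂ ≥ 2`. -/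
theorem zeta_double_shuffle (k₁ k₂ : ℕ) (h₁ : 2 ≤ k₁) (h₂ : 2 ≤ k₂) :
    zeta2 k₁ k₂ + zeta2 k₂ k₁ + zeta1 (k₁ + k₂) =
      (∑ i ∈ Finset.range k₁, (Nat.choose (k₂ - 1 + i) i : ℝ) * zeta2 (k₁ - i) (k₂ + i)) +
      (∑ j ∈ Finset.range k₂, (Nat.choose (k₁ - 1 + j) j : ℝ) * zeta2 (k₂ - j) (k₁ + j)) := by
  simp only [choose_sub_one_add_eq_multichoose (by lia : k₁ ≠ 0),
    choose_sub_one_add_eq_multichoose (by lia : k₂ ≠ 0)]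
  rw [← zeta1_mul_zeta1_eq_zeta2_add_zeta2_add_zeta1 h₁ h₂,
    zeta1_mul_zeta1_eq_sum_multichoose h₁ h₂]
end
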